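/- (Theorem 1, convergence) In the opinion game, every sequence of asynchronous improvement steps is finite; consequently, starting from any initial profile, any maximal sequence of asynchronous improvement steps terminates at a profile that is a Nash equilibrium of the opinion game. -/

import Mathlib

open Finset

/-- The recommendation function with threshold λ = 1/2. -/
noncomputable def sRec (x : ℝ) : ℝ :=
  if x < -(1/2 : ℝ) then -1 else if (1/2 : ℝ) < x then 1 else 0

/-- Membership in the opinion grid Θ = {-1, -1+δ, …, 1-δ, 1}. -/
def inGrid (δ x : ℝ) : Prop := |x| ≤ 1 ∧ ∃ k : ℤ, x = k * δ

/-- Cost to agent `i` of holding opinion `y` when the current profile is `x`.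
Non-edges are modelled by weight `0`. -/
noncomputable def cost {n : ℕ} (b : ℝ) (w : Fin n → Fin n → ℝ) (i : Fin n)
    (y : ℝ) (x : Fin n → ℝ) : ℝ :=
  b * (y - sRec (x i)) ^ 2 + ∑ j, w i j * (y - x j) ^ 2

/-- An asynchronous improvement step: a single agent `i` switches to an opinion
`y ∈ Θ` that strictly decreases her cost. -/
def ImprStep {n : ℕ} (δ b : ℝ) (w : Fin n → Fin n → ℝ) (x x' : Fin n → ℝ) : Prop :=
  ∃ i y, inGrid δ y ∧ cost b w i y x < cost b w i (x i) x ∧ x' = Function.update x i y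

/-- A profile is a Nash equilibrium (stable) if every agent's opinion minimizes
her cost over Θ. -/
def NashEq {n : ℕ} (δ b : ℝ) (w : Fin n → Fin n → ℝ) (x : Fin n → ℝ) : Prop :=
  ∀ i y, inGrid δ y → cost b w i (x i) x ≤ cost b w i y x

noncomputable def hConv (x : ℝ) : ℝ := max 0 (|x| - 1 / 2)

lemma hConv_subgrad (x y : ℝ) : sRec x * (y - x) ≤ hConv y - hConv x := by
  have h1 : 0 ≤ hConv y := le_max_left _ _
  have h2 : |y| - 1 / 2 ≤ hConv y := le_max_right _ _
  have h3 := le_abs_self y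
  have h4 := neg_le_abs y
  unfold sRec
  split_ifs with h h'
  · have : hConv x = -x - 1 / 2 := by
      unfold hConv
      rw [abs_of_neg (by linarith), max_eq_right (by linarith)]
    linarith
  · have : hConv x = x - 1 / 2 := by
      unfold hConv
      rw [abs_of_pos (by linarith), max_eq_right (by linarith)]
    linarith
  · have : hConv x = 0 := by
      unfold hConv
      apply max_eq_left
      have : |x| ≤ 1 / 2 := abs_le.2 ⟨by linarith, by linarith⟩
      linarith
    linarith

noncomputable def pot {n : ℕ} (b : ℝ) (w : Fin n → Fin n → ℝ) (x : Fin n → ℝ) : ℝ :=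
  2 * ∑ i, b * (x i ^ 2 - 2 * hConv (x i)) + ∑ i, ∑ j, w i j * (x i - x j) ^ 2

lemma pot_decr {n : ℕ} (δ b : ℝ) (hb : 0 < b) (w : Fin n → Fin n → ℝ)
    (hsym : ∀ i j, w i j = w j i) (hdiag : ∀ i, w i i = 0)
    (x x' : Fin n → ℝ) (h : ImprStep δ b w x x') : pot b w x' < pot b w x := by
  obtain ⟨i, y, -, hc, rfl⟩ := h
  set x' := Function.update x i y with hx'
  have hi : x' i = y := by simp [hx']
  have hne : ∀ k, k ≠ i → x' k = x k := fun k hk => by simp [hx', hk]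
  have e1 : ∑ k, b * (x' k ^ 2 - 2 * hConv (x' k)) - ∑ k, b * (x k ^ 2 - 2 * hConv (x k))
      = b * (y ^ 2 - 2 * hConv y) - b * (x i ^ 2 - 2 * hConv (x i)) := by
    rw [← Finset.sum_sub_distrib, Finset.sum_eq_single i]
    · rw [hi]
    · intro k _ hk
      rw [hne k hk, sub_self]
    · simp
  set A : Fin n → ℝ := fun l => w i l * (y - x l) ^ 2 - w i l * (x i - x l) ^ 2 with hA
  have e2 : ∑ k, ∑ l, w k l * (x' k - x' l) ^ 2 - ∑ k, ∑ l, w k l * (x k - x l) ^ 2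
      = 2 * ∑ l, A l := by
    have : ∀ k l, w k l * (x' k - x' l) ^ 2 - w k l * (x k - x l) ^ 2
        = (if k = i then A l else 0) + (if l = i then A k else 0) := by
      intro k l
      by_cases hk : k = i <;> by_cases hl : l = i
      · subst hk; subst hl; simp [hA, hdiag]
      · subst hk; simp [hA, hl, hi, hne l hl]
      · subst hl; simp only [hA, hk, hi, hne k hk, hsym k l, if_true, if_false]; ring
      · simp [hk, hl, hne k hk, hne l hl]
    simp_rw [← Finset.sum_sub_distrib, this, Finset.sum_add_distrib]
    rw [Finset.sum_comm]
    simp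
    ring
  have e3 : ∑ l, A l = ∑ l, w i l * (y - x l) ^ 2 - ∑ l, w i l * (x i - x l) ^ 2 := by
    simp [hA, Finset.sum_sub_distrib]
  have hs := mul_le_mul_of_nonneg_left (hConv_subgrad (x i) y) hb.le
  unfold cost at hc
  unfold pot
  nlinarith [hs, hc, e1, e2, e3]

lemma grid_finite (m : ℕ) (hm : 2 ≤ m) : {x : ℝ | inGrid (1 / m) x}.Finite := by
  refine ((Set.finite_Icc (-(m : ℤ)) m).image (fun k : ℤ => (k : ℝ) * (1 / m))).subset ?_
  rintro x ⟨hx, k, rfl⟩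
  refine ⟨k, ?_, rfl⟩
  have hm' : (0 : ℝ) < m := by positivity
  rw [abs_le, mul_one_div, le_div_iff₀ hm', div_le_iff₀ hm'] at hx
  constructor
  · have := hx.1
    rw [neg_one_mul] at this
    exact_mod_cast this
  · have := hx.2
    rw [one_mul] at this
    exact_mod_cast this

/-- Every sequence of asynchronous improvement steps is finite, and any profile
from which no improvement step is possible is a Nash equilibrium; hence maximal
improvement sequences terminate at a Nash equilibrium. -/
theorem async_dynamics_converges
    {n : ℕ} (hn : 2 ≤ n) (m : ℕ) (hm : 2 ≤ m) (δ : ℝ) (hδ : δ = 1 / m)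
    (b : ℝ) (hb : 0 < b) (w : Fin n → Fin n → ℝ)
    (hsym : ∀ i j, w i j = w j i) (hdiag : ∀ i, w i i = 0)
    (hw : ∀ i j, 0 ≤ w i j) :
    (∀ seq : ℕ → (Fin n → ℝ), (∀ i, inGrid δ (seq 0 i)) →
      ¬ (∀ t, ImprStep δ b w (seq t) (seq (t + 1)))) ∧
    (∀ x : Fin n → ℝ, (∀ i, inGrid δ (x i)) →
      (¬ ∃ x', ImprStep δ b w x x') → NashEq δ b w x) := by
  constructor
  · intro seq h0 hstep
    have hg : ∀ t i, inGrid δ (seq t i) := by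
      intro t
      induction t with
      | zero => exact h0
      | succ t ih =>
        obtain ⟨i, y, hy, -, he⟩ := hstep t
        intro j
        rw [he]
        by_cases hj : j = i
        · subst hj; simpa using hy
        · simpa [hj] using ih j
    have hanti : StrictAnti (fun t => pot b w (seq t)) :=
      strictAnti_nat_of_succ_lt fun t => pot_decr δ b hb w hsym hdiag _ _ (hstep t)
    have hinj : Function.Injective seq := fun s t h => hanti.injective (by simp [h])
    subst hδ
    have hfin : (Set.univ.pi fun _ : Fin n => {x : ℝ | inGrid (1 / m) x}).Finite :=
      Set.Finite.pi fun _ => grid_finite m hm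
    exact Set.infinite_range_of_injective hinj
      (hfin.subset (by rintro _ ⟨t, rfl⟩ i _; exact hg t i))
  · intro x _ h i y hy
    by_contra hc
    exact h ⟨_, i, y, hy, not_le.1 hc, rfl⟩
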